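/- arXiv:2601.16765 — 2 statements merged into one kernel-verified Lean document; each statement's English description precedes it below -/
import Mathlib

section
/- Let n ≥ 4 and set I = Δ_n + J_n. Then I ∩ R_1 = 0, dim_ℂ(I ∩ R_2) = C(n+1,2) − 2, and m³ ⊆ I. Consequently the Hilbert function of R/I is (1, n, 2) (i.e. h_{R/I}(0)=1, h_{R/I}(1)=n, h_{R/I}(2)=2, and h_{R/I}(k)=0 for k ≥ 3) and dim_ℂ R/I = n + 3. -/
open MvPolynomial

noncomputable section

/-- `R n = ℂ[x_1, …, x_n]`. -/
abbrev R (n : ℕ) : Type := MvPolynomial (Fin n) ℂ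

/-- `m = (x_1, …, x_n)`, the ideal generated by the variables. -/
def mId (n : ℕ) : Ideal (R n) := Ideal.span (Set.range MvPolynomial.X)

/-- `R_d`, the ℂ-subspace of homogeneous polynomials of degree `d`. -/
def Rdeg (n d : ℕ) : Submodule ℂ (R n) := homogeneousSubmodule (Fin n) ℂ d

/-- The Hilbert function `h_{R/I}(k) = dim_ℂ (m^k + I)/(m^{k+1} + I)`. -/
def hilbFn (n : ℕ) (I : Ideal (R n)) (k : ℕ) : ℕ :=
  Module.finrank ℂ
    (↥((mId n ^ k ⊔ I).restrictScalars ℂ) ⧸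
      (Submodule.comap ((mId n ^ k ⊔ I).restrictScalars ℂ).subtype
        ((mId n ^ (k + 1) ⊔ I).restrictScalars ℂ)))

/-- The cyclic predecessor on `Fin n`: `prev c` is `c - 1 mod n`. -/
def prev {n : ℕ} (c : Fin n) : Fin n := ⟨(c.val + (n - 1)) % n, Nat.mod_lt _ c.pos⟩

/-- `Δ_n`: the ideal generated by the 2×2 minors of the 2×n matrix with rows
`(x_1, x_2, …, x_n)` and `(x_n, x_1, …, x_{n-1})`. -/
def Delta (n : ℕ) : Ideal (R n) :=
  Ideal.span { f : R n | ∃ c d : Fin n, f = X c * X (prev d) - X d * X (prev c) }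

/-- `J_n`: the ideal generated by the `n − 2` quadrics `x_n (x_i + x_{n−1})`, `i = 1, …, n−2`
(in zero-indexed variables: `X (n-1) * (X i + X (n-2))` for `i` with `i + 2 < n`). -/
def Jn (n : ℕ) : Ideal (R n) :=
  Ideal.span { f : R n | ∃ (i : Fin n) (h : (i : ℕ) + 2 < n),
    f = X ⟨n - 1, by omega⟩ * (X i + X ⟨n - 2, by omega⟩) }

/-- The class of an index in `ZMod n`. -/
def zc {n : ℕ} (i : Fin n) : ZMod n := (i.val : ZMod n)

/-- The variable attached to a residue class. -/
def ofZ {n : ℕ} [NeZero n] (z : ZMod n) : Fin n := ⟨z.val, ZMod.val_lt z⟩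

lemma zc_ofZ {n : ℕ} [NeZero n] (z : ZMod n) : zc (ofZ z) = z := by
  simp [zc, ofZ]

lemma ofZ_zc {n : ℕ} [NeZero n] (i : Fin n) : ofZ (zc i) = i := by
  apply Fin.ext
  simp [zc, ofZ, ZMod.val_natCast, Nat.mod_eq_of_lt i.isLt]

lemma zc_inj {n : ℕ} [NeZero n] {i j : Fin n} (h : zc i = zc j) : i = j := by
  rw [← ofZ_zc i, h, ofZ_zc]

lemma zc_prev {n : ℕ} (c : Fin n) : zc (prev c) = zc c - 1 := by
  have h : 1 ≤ n := c.pos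
  simp [zc, prev, Nat.cast_sub h]
  ring

lemma zmod_ne {n : ℕ} (hn : 4 ≤ n) (k : ℕ) (h0 : 0 < k) (h1 : k < 4) : (k : ZMod n) ≠ 0 := by
  rw [Ne, ZMod.natCast_eq_zero_iff]
  intro h
  have := Nat.le_of_dvd h0 h
  omega

lemma zmod_ne1 {n : ℕ} (hn : 4 ≤ n) : (1 : ZMod n) ≠ 0 := by
  simpa using zmod_ne hn 1 (by norm_num) (by norm_num)

lemma zmod_ne2 {n : ℕ} (hn : 4 ≤ n) : (2 : ZMod n) ≠ 0 := by
  simpa using zmod_ne hn 2 (by norm_num) (by norm_num)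

/-- The weight of a residue class in degree two. -/
def wt (n : ℕ) (s : ZMod n) : ℂ × ℂ :=
  if s = -2 then (1, 0) else if s = -3 then (0, -1) else (0, 1)

abbrev GA (n : ℕ) : Type := AddMonoidAlgebra ℂ (ZMod n)

/-- The graded map `x_i ↦ t^i T`. -/
def psi (n : ℕ) : R n →ₐ[ℂ] Polynomial (GA n) :=
  aeval (fun i => Polynomial.monomial 1 (AddMonoidAlgebra.single (zc i) (1 : ℂ)))

def cf (n k : ℕ) : R n →ₗ[ℂ] GA n :=
  ((Polynomial.lcoeff (GA n) k).restrictScalars ℂ).comp (psi n).toLinearMap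

lemma cf_apply (n k : ℕ) (f : R n) : cf n k f = (psi n f).coeff k := rfl

def wL (n : ℕ) : GA n →ₗ[ℂ] ℂ × ℂ :=
  (Finsupp.linearCombination ℂ (wt n)).comp
    (AddMonoidAlgebra.coeffLinearEquiv ℂ : GA n ≃ₗ[ℂ] _).toLinearMap

lemma wL_single (n : ℕ) (s : ZMod n) (a : ℂ) : wL n (AddMonoidAlgebra.single s a) = a • wt n s := by
  change Finsupp.linearCombination ℂ (wt n) (Finsupp.single s a) = _
  simp

def c0 (n : ℕ) : R n →ₗ[ℂ] ℂ := (MvPolynomial.aeval (fun _ => (0 : ℂ)) : R n →ₐ[ℂ] ℂ).toLinearMap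

def c1 (n : ℕ) : R n →ₗ[ℂ] (Fin n → ℂ) :=
  LinearMap.pi fun i =>
    ((Finsupp.lapply (zc i)).comp
      (AddMonoidAlgebra.coeffLinearEquiv ℂ : GA n ≃ₗ[ℂ] _).toLinearMap).comp (cf n 1)

lemma c1_apply (n : ℕ) (f : R n) (i : Fin n) : c1 n f i = (cf n 1 f).coeff (zc i) := rfl

def c2 (n : ℕ) : R n →ₗ[ℂ] ℂ × ℂ := (wL n).comp (cf n 2)

lemma c2_apply (n : ℕ) (f : R n) : c2 n f = wL n (cf n 2 f) := rfl

lemma psi_X (n : ℕ) (i : Fin n) :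
    psi n (X i) = Polynomial.monomial 1 (AddMonoidAlgebra.single (zc i) (1 : ℂ)) := by
  simp [psi]

lemma psi_XX (n : ℕ) (i j : Fin n) : psi n (X i * X j) =
    Polynomial.monomial 2 (AddMonoidAlgebra.single (zc i + zc j) (1 : ℂ)) := by
  rw [map_mul, psi_X, psi_X, Polynomial.monomial_mul_monomial, AddMonoidAlgebra.single_mul_single]
  simp

lemma cf_zero (n : ℕ) (f : R n) : cf n 0 f = algebraMap ℂ (GA n) (c0 n f) := by
  have h : ((Polynomial.aeval (0 : GA n)).restrictScalars ℂ).comp (psi n) =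
      (Algebra.ofId ℂ (GA n)).comp (MvPolynomial.aeval (fun _ => (0 : ℂ))) := by
    apply MvPolynomial.algHom_ext
    intro i
    simp [psi_X]
  have h2 := DFunLike.congr_fun h f
  rw [cf_apply, Polynomial.coeff_zero_eq_aeval_zero]
  exact h2

lemma c0_mul (n : ℕ) (p q : R n) : c0 n (p * q) = c0 n p * c0 n q := by simp [c0]

lemma cf1_eq_zero (n : ℕ) [NeZero n] (f : R n) (h : c1 n f = 0) : cf n 1 f = 0 := by
  apply AddMonoidAlgebra.ext
  ext z
  have := congrFun h (ofZ z)
  rw [c1_apply, zc_ofZ] at this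
  simpa using this

/-- The ideal which turns out to be `Δ_n + J_n`. -/
def KK (n : ℕ) : Ideal (R n) where
  carrier := {f | c0 n f = 0 ∧ cf n 1 f = 0 ∧ c2 n f = 0}
  zero_mem' := by simp
  add_mem' := by
    rintro a b ⟨h1, h2, h3⟩ ⟨h4, h5, h6⟩
    simp [*]
  smul_mem' := by
    rintro q f ⟨h1, h2, h3⟩
    have h0 : cf n 0 f = 0 := by rw [cf_zero, h1, map_zero]
    refine ⟨?_, ?_, ?_⟩
    · simp [c0_mul, h1]
    · rw [cf_apply] at h0 h2
      rw [cf_apply, smul_eq_mul, map_mul, Polynomial.mul_coeff_one, h0, h2]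
      simp
    · have : cf n 2 (q • f) = c0 n q • cf n 2 f := by
        rw [Algebra.smul_def (c0 n q), ← cf_zero]
        rw [cf_apply] at h0 h2
        rw [cf_apply, smul_eq_mul, map_mul, Polynomial.coeff_mul,
          Finset.Nat.sum_antidiagonal_eq_sum_range_succ_mk]
        simp [Finset.sum_range_succ, h0, h2, cf_apply]
      rw [c2_apply, this, map_smul, ← c2_apply, h3, smul_zero]

lemma mem_KK (n : ℕ) (f : R n) : f ∈ KK n ↔ c0 n f = 0 ∧ cf n 1 f = 0 ∧ c2 n f = 0 := Iff.rfl

lemma c0_C (n : ℕ) (a : ℂ) : c0 n (C a) = a := by simp [c0]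
lemma c0_X (n : ℕ) (i : Fin n) : c0 n (X i) = 0 := by simp [c0]
lemma cf_C (n : ℕ) (a : ℂ) (k : ℕ) (hk : 0 < k) : cf n k (C a) = 0 := by
  rw [cf_apply, ← MvPolynomial.algebraMap_eq, AlgHom.commutes, Polynomial.algebraMap_apply,
    Polynomial.coeff_C, if_neg (by omega)]
lemma cf_X (n : ℕ) (i : Fin n) : cf n 1 (X i) = AddMonoidAlgebra.single (zc i) (1 : ℂ) := by
  simp [cf_apply, psi_X]
lemma cf_X2 (n : ℕ) (i : Fin n) : cf n 2 (X i) = 0 := by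
  simp [cf_apply, psi_X, Polynomial.coeff_monomial]
lemma cf_XX1 (n : ℕ) (i j : Fin n) : cf n 1 (X i * X j) = 0 := by
  simp [cf_apply, psi_XX, Polynomial.coeff_monomial]
lemma c2_XX (n : ℕ) (i j : Fin n) : c2 n (X i * X j) = wt n (zc i + zc j) := by
  simp [c2_apply, cf_apply, psi_XX, wL_single]

lemma zc_last {n : ℕ} (hn : 4 ≤ n) : zc (⟨n - 1, by omega⟩ : Fin n) = -1 := by
  simp [zc, Nat.cast_sub (show 1 ≤ n by omega)]
lemma zc_last2 {n : ℕ} (hn : 4 ≤ n) : zc (⟨n - 2, by omega⟩ : Fin n) = -2 := by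
  simp [zc, Nat.cast_sub (show 2 ≤ n by omega)]

abbrev II (n : ℕ) : Ideal (R n) := Delta n ⊔ Jn n

lemma idx_small_iff {n : ℕ} (hn : 4 ≤ n) (i : Fin n) :
    (i : ℕ) + 2 < n ↔ zc i ≠ -1 ∧ zc i ≠ -2 := by
  have : NeZero n := ⟨by omega⟩
  rw [← zc_last hn, ← zc_last2 hn]
  constructor
  · intro h
    constructor <;> intro h2 <;> have := congrArg Fin.val (zc_inj h2) <;> simp at this <;> omega
  · rintro ⟨h1, h2⟩
    have := i.isLt
    have h3 : (i : ℕ) ≠ n - 1 := fun h => h1 (congrArg zc (Fin.ext h))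
    have h4 : (i : ℕ) ≠ n - 2 := fun h => h2 (congrArg zc (Fin.ext h))
    omega

lemma II_le_KK {n : ℕ} (hn : 4 ≤ n) : II n ≤ KK n := by
  refine sup_le (Ideal.span_le.2 ?_) (Ideal.span_le.2 ?_)
  · rintro f ⟨c, d, rfl⟩
    refine ⟨?_, ?_, ?_⟩
    · simp [c0_mul, c0_X]
    · simp [cf_XX1]
    · rw [map_sub, c2_XX, c2_XX, zc_prev, zc_prev, sub_eq_zero]
      congr 1
      ring
  · rintro f ⟨i, h, rfl⟩
    obtain ⟨h1, h2⟩ := (idx_small_iff hn i).1 h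
    refine ⟨?_, ?_, ?_⟩
    · simp [c0_mul, c0_X]
    · simp [mul_add, cf_XX1]
    · rw [mul_add, map_add, c2_XX, c2_XX, zc_last hn, zc_last2 hn]
      have e1 : (-1 + zc i : ZMod n) ≠ -2 := fun h => h1 (by linear_combination h)
      have e2 : (-1 + zc i : ZMod n) ≠ -3 := fun h => h2 (by linear_combination h)
      have e3 : (-1 + -2 : ZMod n) = -3 := by ring
      have e4 : (-3 : ZMod n) ≠ -2 := fun h => zmod_ne1 hn (by linear_combination -h)
      rw [e3, wt, if_neg e1, if_neg e2, wt, if_neg e4, if_pos rfl]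
      simp

/-- Variables in the quotient, indexed by residue classes. -/
def yy (n : ℕ) [NeZero n] (z : ZMod n) : R n ⧸ II n := Ideal.Quotient.mk (II n) (X (ofZ z))

lemma yy_shift {n : ℕ} [NeZero n] (a b : ZMod n) :
    yy n a * yy n b = yy n (a - 1) * yy n (b + 1) := by
  have h : X (ofZ a) * X (prev (ofZ (b + 1))) - X (ofZ (b + 1)) * X (prev (ofZ a)) ∈ II n :=
    Ideal.mem_sup_left (Ideal.subset_span ⟨_, _, rfl⟩)
  have e1 : prev (ofZ (b + 1)) = ofZ b := zc_inj (by rw [zc_prev, zc_ofZ, zc_ofZ]; ring)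
  have e2 : prev (ofZ a) = ofZ (a - 1) := zc_inj (by rw [zc_prev, zc_ofZ, zc_ofZ])
  rw [e1, e2] at h
  have := Ideal.Quotient.eq.2 h
  rw [map_mul, map_mul] at this
  rw [yy, yy, yy, yy, this, mul_comm]

lemma yy_shift_nat {n : ℕ} [NeZero n] (a b : ZMod n) (k : ℕ) :
    yy n a * yy n b = yy n (a - k) * yy n (b + k) := by
  induction k with
  | zero => simp
  | succ k ih =>
    rw [ih, yy_shift]
    push_cast
    congr 2 <;> ring

lemma yy_mul {n : ℕ} [NeZero n] (a b c d : ZMod n) (h : a + b = c + d) :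
    yy n a * yy n b = yy n c * yy n d := by
  rw [yy_shift_nat a b (a - c).val, ZMod.natCast_zmod_val]
  congr 2
  · ring
  · linear_combination h

lemma yy_J {n : ℕ} [NeZero n] (hn : 4 ≤ n) (z : ZMod n) (h1 : z ≠ -1) (h2 : z ≠ -2) :
    yy n (-1) * (yy n z + yy n (-2)) = 0 := by
  have h : X ⟨n - 1, by omega⟩ * (X (ofZ z) + X ⟨n - 2, by omega⟩) ∈ II n :=
    Ideal.mem_sup_right (Ideal.subset_span ⟨ofZ z, (idx_small_iff hn _).2
      (by rw [zc_ofZ]; exact ⟨h1, h2⟩), rfl⟩)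
  rw [show (⟨n - 1, by omega⟩ : Fin n) = ofZ (-1) from zc_inj (by rw [zc_ofZ, zc_last hn]),
    show (⟨n - 2, by omega⟩ : Fin n) = ofZ (-2) from zc_inj (by rw [zc_ofZ, zc_last2 hn])] at h
  simpa [yy] using Ideal.Quotient.eq_zero_iff_mem.2 h

/-- Degree two products in the quotient. -/
lemma yy_wt {n : ℕ} [NeZero n] (hn : 4 ≤ n) (a b : ZMod n) :
    yy n a * yy n b = (wt n (a + b)).1 • (yy n (-1) * yy n (-1)) +
      (wt n (a + b)).2 • (yy n (-1) * yy n 0) := by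
  have h0 : yy n (-1) * yy n (-2) = - (yy n (-1) * yy n 0) := by
    have := yy_J hn 0 (fun h => zmod_ne1 hn (by linear_combination h))
      (fun h => zmod_ne2 hn (by linear_combination h))
    linear_combination this
  rw [wt]
  split_ifs with h1 h2
  · rw [yy_mul a b (-1) (-1) (by rw [h1]; ring)]
    simp
  · rw [yy_mul a b (-1) (-2) (by rw [h2]; ring), h0]
    simp
  · rw [yy_mul a b (-1) (a + b + 1) (by ring)]
    have := yy_J hn (a + b + 1) (fun h => h1 (by linear_combination h))
      (fun h => h2 (by linear_combination h))
    simp only [zero_smul, one_smul, zero_add]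
    linear_combination this - h0

lemma yy3 {n : ℕ} [NeZero n] (hn : 4 ≤ n) (a b c : ZMod n) : yy n a * yy n b * yy n c = 0 := by
  have key : ∀ a b c r : ZMod n, a + b + c - r ≠ 0 → a + b + c - r ≠ 1 →
      yy n a * yy n b * yy n c = - (yy n 0 * yy n 0 * yy n r) := by
    intro a b c r h0 h1
    have e1 : yy n a * yy n b * yy n c = yy n (r + 3) * yy n (-1) * yy n (a + b + c - r - 2) := by
      rw [yy_mul a b (r + 3) (a + b - r - 3) (by ring), mul_assoc, mul_assoc,
        yy_mul (a + b - r - 3) c (-1) (a + b + c - r - 2) (by ring)]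
    have e2 : yy n 0 * yy n 0 * yy n r = yy n (r + 3) * yy n (-1) * yy n (-2) := by
      rw [yy_mul 0 0 (r + 3) (- r - 3) (by ring), mul_assoc, mul_assoc,
        yy_mul (- r - 3) r (-1) (-2) (by ring)]
    have := yy_J hn (a + b + c - r - 2) (fun h => h1 (by linear_combination h))
      (fun h => h0 (by linear_combination h))
    rw [e1, e2]
    linear_combination yy n (r + 3) * this
  have h1 := zmod_ne1 hn
  have h2 := zmod_ne2 hn
  -- `Z s = y_0 y_0 y_s`
  have s0 := key a b c (a + b + c + 1) (fun h => h1 (by linear_combination -h))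
    (fun h => h2 (by linear_combination -h))
  have s1 := key 0 0 (a + b + c + 1) (a + b + c + 2) (fun h => h1 (by linear_combination -h))
    (fun h => h2 (by linear_combination -h))
  have s2 := key 0 0 (a + b + c + 2) (a + b + c) (fun h => h2 (by linear_combination h))
    (fun h => h1 (by linear_combination h))
  have s3 := key a b c (a + b + c - 2) (fun h => h2 (by linear_combination h))
    (fun h => h1 (by linear_combination h))
  have s4 := key 0 0 (a + b + c) (a + b + c - 2) (fun h => h2 (by linear_combination h))
    (fun h => h1 (by linear_combination h))
  have : (2 : ℂ) • (yy n a * yy n b * yy n c) = 0 := by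
    rw [two_smul]
    linear_combination s0 - s1 + s2 + s3 - s4
  exact (smul_eq_zero.1 this).resolve_left two_ne_zero

lemma m3_le {n : ℕ} (hn : 4 ≤ n) : mId n ^ 3 ≤ II n := by
  have : NeZero n := ⟨by omega⟩
  rw [pow_three', mId, Ideal.span_mul_span', Ideal.span_mul_span', Ideal.span_le]
  rintro f hf
  obtain ⟨g, hg, h, ⟨k, rfl⟩, rfl⟩ := Set.mem_mul.1 hf
  obtain ⟨h1, ⟨i, rfl⟩, h2, ⟨j, rfl⟩, rfl⟩ := Set.mem_mul.1 hg
  have := yy3 hn (zc i) (zc j) (zc k)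
  simp only [yy, ofZ_zc, ← map_mul] at this
  exact Ideal.Quotient.eq_zero_iff_mem.1 this

def sg1 (n : ℕ) : (Fin n → ℂ) →ₗ[ℂ] R n := Fintype.linearCombination ℂ (X : Fin n → R n)

def sg2 (n : ℕ) [NeZero n] : ℂ × ℂ →ₗ[ℂ] R n :=
  (LinearMap.toSpanSingleton ℂ (R n) (X (ofZ (-1)) * X (ofZ (-1)))).coprod
    (LinearMap.toSpanSingleton ℂ (R n) (X (ofZ (-1)) * X (ofZ 0)))

lemma sg1_apply (n : ℕ) (c : Fin n → ℂ) : sg1 n c = ∑ i, c i • (X i : R n) := by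
  simp [sg1, Fintype.linearCombination_apply]

lemma sg2_apply (n : ℕ) [NeZero n] (d : ℂ × ℂ) :
    sg2 n d = d.1 • (X (ofZ (-1)) * X (ofZ (-1)) : R n) + d.2 • (X (ofZ (-1)) * X (ofZ 0)) := by
  simp [sg2]

lemma X_mem (n : ℕ) (i : Fin n) : (X i : R n) ∈ mId n := Ideal.subset_span ⟨i, rfl⟩

lemma smul_mem' {n : ℕ} (I : Ideal (R n)) (a : ℂ) {f : R n} (h : f ∈ I) : a • f ∈ I :=
  (I.restrictScalars ℂ).smul_mem a h

lemma sg1_mem (n : ℕ) (c : Fin n → ℂ) : sg1 n c ∈ mId n := by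
  rw [sg1_apply]
  exact Ideal.sum_mem _ fun i _ => smul_mem' _ _ (X_mem n i)

lemma sg2_mem (n : ℕ) [NeZero n] (d : ℂ × ℂ) : sg2 n d ∈ mId n ^ 2 := by
  rw [sg2_apply, pow_two]
  exact Ideal.add_mem _ (smul_mem' _ _ (Ideal.mul_mem_mul (X_mem _ _) (X_mem _ _)))
    (smul_mem' _ _ (Ideal.mul_mem_mul (X_mem _ _) (X_mem _ _)))

lemma XX_sg2 {n : ℕ} [NeZero n] (hn : 4 ≤ n) (i j : Fin n) :
    X i * X j - sg2 n (wt n (zc i + zc j)) ∈ II n := by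
  rw [← Ideal.Quotient.eq, sg2_apply]
  have := yy_wt hn (zc i) (zc j)
  simp only [yy, ofZ_zc, ← map_mul] at this
  rw [this, map_add]
  rfl

lemma decomp_exists {n : ℕ} [NeZero n] (hn : 4 ≤ n) (p : R n) :
    ∃ a c d, p - (C a + sg1 n c + sg2 n d) ∈ II n := by
  induction p using MvPolynomial.induction_on with
  | C a => exact ⟨a, 0, 0, by simp⟩
  | add p q hp hq =>
    obtain ⟨a, c, d, h⟩ := hp
    obtain ⟨a', c', d', h'⟩ := hq
    refine ⟨a + a', c + c', d + d', ?_⟩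
    have := Ideal.add_mem _ h h'
    convert this using 1
    simp only [map_add]
    ring
  | mul_X p j hp =>
    obtain ⟨a, c, d, h⟩ := hp
    refine ⟨0, a • Pi.single j 1, ∑ i, c i • wt n (zc i + zc j), ?_⟩
    have h1 : (p - (C a + sg1 n c + sg2 n d)) * X j ∈ II n := Ideal.mul_mem_right _ _ h
    have h2 : sg2 n d * X j ∈ II n := by
      apply m3_le hn
      rw [pow_succ]
      exact Ideal.mul_mem_mul (sg2_mem n d) (X_mem n j)
    have h3 : ∑ i, c i • (X i * X j - sg2 n (wt n (zc i + zc j))) ∈ II n :=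
      Ideal.sum_mem _ fun i _ => smul_mem' _ _ (XX_sg2 hn i j)
    have h4 : sg1 n (a • Pi.single j 1) = C a * X j := by
      rw [map_smul, sg1, Fintype.linearCombination_apply_single, one_smul, smul_eq_C_mul]
    have h5 : ∑ i, c i • (X i * X j - sg2 n (wt n (zc i + zc j))) =
        sg1 n c * X j - sg2 n (∑ i, c i • wt n (zc i + zc j)) := by
      rw [map_sum, sg1_apply, Finset.sum_mul, ← Finset.sum_sub_distrib]
      refine Finset.sum_congr rfl fun i _ => ?_
      rw [smul_sub, map_smul, smul_mul_assoc]
    rw [h5] at h3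
    have := Ideal.add_mem _ (Ideal.add_mem _ h1 h2) h3
    convert this using 1
    rw [h4, map_zero]
    ring

lemma c1_C (n : ℕ) (a : ℂ) : c1 n (C a) = 0 := by
  ext i
  rw [c1_apply, cf_C _ _ _ one_pos]
  simp

lemma c1_X (n : ℕ) [NeZero n] (i : Fin n) : c1 n (X i) = Pi.single i 1 := by
  ext j
  rw [c1_apply, cf_X, AddMonoidAlgebra.coeff_single, Finsupp.single_apply, Pi.single_apply]
  by_cases h : j = i
  · subst h; simp
  · rw [if_neg h, if_neg fun h' => h (zc_inj h').symm]

lemma c1_XX (n : ℕ) (i j : Fin n) : c1 n (X i * X j) = 0 := by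
  ext k
  rw [c1_apply, cf_XX1]
  simp

lemma c0_sg1 (n : ℕ) (c : Fin n → ℂ) : c0 n (sg1 n c) = 0 := by
  simp [sg1_apply, c0_X]

lemma c1_sg1 (n : ℕ) [NeZero n] (c : Fin n → ℂ) : c1 n (sg1 n c) = c := by
  ext j
  simp [sg1_apply, c1_X, Pi.single_apply]

lemma c2_C (n : ℕ) (a : ℂ) : c2 n (C a) = 0 := by
  rw [c2_apply, cf_C _ _ _ two_pos, map_zero]

lemma c2_sg1 (n : ℕ) (c : Fin n → ℂ) : c2 n (sg1 n c) = 0 := by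
  simp [sg1_apply, c2_apply, cf_X2]

lemma c0_sg2 (n : ℕ) [NeZero n] (d : ℂ × ℂ) : c0 n (sg2 n d) = 0 := by
  simp [sg2_apply, c0_mul, c0_X]

lemma c1_sg2 (n : ℕ) [NeZero n] (d : ℂ × ℂ) : c1 n (sg2 n d) = 0 := by
  simp [sg2_apply, c1_XX]

lemma c2_sg2 {n : ℕ} [NeZero n] (hn : 4 ≤ n) (d : ℂ × ℂ) : c2 n (sg2 n d) = d := by
  have e1 : (-1 + -1 : ZMod n) = -2 := by ring
  have e2 : (-1 + 0 : ZMod n) ≠ -2 := fun h => zmod_ne1 hn (by linear_combination h)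
  have e3 : (-1 + 0 : ZMod n) ≠ -3 := fun h => zmod_ne2 hn (by linear_combination h)
  rw [sg2_apply, map_add, map_smul, map_smul, c2_XX, c2_XX, zc_ofZ, zc_ofZ, wt, wt, if_pos e1,
    if_neg e2, if_neg e3]
  ext <;> simp

lemma mem_II {n : ℕ} [NeZero n] (hn : 4 ≤ n) {f : R n} (hf : f ∈ II n) :
    c0 n f = 0 ∧ c1 n f = 0 ∧ c2 n f = 0 := by
  obtain ⟨h0, h1, h2⟩ := II_le_KK hn hf
  refine ⟨h0, ?_, h2⟩
  ext i
  rw [c1_apply, h1]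
  simp

lemma decomp {n : ℕ} [NeZero n] (hn : 4 ≤ n) (p : R n) :
    p - (C (c0 n p) + sg1 n (c1 n p) + sg2 n (c2 n p)) ∈ II n := by
  obtain ⟨a, c, d, h⟩ := decomp_exists hn p
  obtain ⟨h0, h1, h2⟩ := mem_II hn h
  simp only [map_sub, map_add, c0_C, c0_sg1, c0_sg2, c1_C, c1_sg1, c1_sg2, c2_C, c2_sg1,
    c2_sg2 hn, sub_eq_zero, zero_add, add_zero] at h0 h1 h2
  rwa [h0, h1, h2]

lemma mem_II_iff {n : ℕ} [NeZero n] (hn : 4 ≤ n) (f : R n) :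
    f ∈ II n ↔ c0 n f = 0 ∧ c1 n f = 0 ∧ c2 n f = 0 := by
  refine ⟨mem_II hn, ?_⟩
  rintro ⟨h0, h1, h2⟩
  have := decomp hn f
  rw [h0, h1, h2] at this
  simpa using this

lemma psi_mem (n k : ℕ) {f : R n} (hf : f ∈ mId n ^ k) : Polynomial.X ^ k ∣ psi n f := by
  have h1 : (mId n).map (psi n) ≤ Ideal.span {Polynomial.X} := by
    rw [mId, Ideal.map_span, Ideal.span_le]
    rintro _ ⟨_, ⟨i, rfl⟩, rfl⟩
    rw [SetLike.mem_coe, Ideal.mem_span_singleton]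
    change _ ∣ psi n (X i)
    rw [psi_X, ← Polynomial.C_mul_X_eq_monomial]
    exact dvd_mul_left _ _
  have h2 := Ideal.mem_map_of_mem (psi n) hf
  rw [Ideal.map_pow] at h2
  have h3 := Ideal.pow_right_mono h1 k h2
  rwa [Ideal.span_singleton_pow, Ideal.mem_span_singleton] at h3

lemma cf_pow (n k j : ℕ) (hj : j < k) {f : R n} (hf : f ∈ mId n ^ k) : cf n j f = 0 :=
  Polynomial.X_pow_dvd_iff.1 (psi_mem n k hf) j hj

lemma c0_pow (n k : ℕ) [NeZero n] (hj : 0 < k) {f : R n} (hf : f ∈ mId n ^ k) : c0 n f = 0 := by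
  have := cf_pow n k 0 hj hf
  rw [cf_zero] at this
  exact (map_eq_zero _).1 this

lemma c1_pow (n k : ℕ) (hj : 1 < k) {f : R n} (hf : f ∈ mId n ^ k) : c1 n f = 0 := by
  ext i
  rw [c1_apply, cf_pow n k 1 hj hf]
  simp

lemma mem_m1 {n : ℕ} [NeZero n] (hn : 4 ≤ n) (f : R n) :
    f ∈ mId n ^ 1 ⊔ II n ↔ c0 n f = 0 := by
  constructor
  · intro h
    obtain ⟨a, ha, b, hb, rfl⟩ := Submodule.mem_sup.1 h
    rw [map_add, c0_pow n 1 one_pos ha, (mem_II hn hb).1, add_zero]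
  · intro h
    have h1 := decomp hn f
    rw [h, map_zero, zero_add] at h1
    have h2 : sg1 n (c1 n f) + sg2 n (c2 n f) ∈ mId n ^ 1 := by
      refine Ideal.add_mem _ (by simpa using sg1_mem n _) ?_
      exact Ideal.pow_le_pow_right one_le_two (sg2_mem n _)
    have := Ideal.add_mem _ ((le_sup_right : II n ≤ mId n ^ 1 ⊔ II n) h1) (Ideal.mem_sup_left h2)
    simpa using this

lemma mem_m2 {n : ℕ} [NeZero n] (hn : 4 ≤ n) (f : R n) :
    f ∈ mId n ^ 2 ⊔ II n ↔ c0 n f = 0 ∧ c1 n f = 0 := by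
  constructor
  · intro h
    obtain ⟨a, ha, b, hb, rfl⟩ := Submodule.mem_sup.1 h
    rw [map_add, map_add, c0_pow n 2 two_pos ha, c1_pow n 2 one_lt_two ha, (mem_II hn hb).1,
      (mem_II hn hb).2.1]
    simp
  · rintro ⟨h, h'⟩
    have h1 := decomp hn f
    rw [h, h', map_zero, map_zero, zero_add, zero_add] at h1
    have := Ideal.add_mem _ ((le_sup_right : II n ≤ mId n ^ 2 ⊔ II n) h1)
      (Ideal.mem_sup_left (sg2_mem n (c2 n f)))
    simpa using this

lemma sup_eq {n : ℕ} (hn : 4 ≤ n) (k : ℕ) (hk : 3 ≤ k) : mId n ^ k ⊔ II n = II n :=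
  sup_eq_right.2 ((Ideal.pow_le_pow_right hk).trans (m3_le hn))

lemma quot_finrank {E V : Type*} [AddCommGroup E] [Module ℂ E] [AddCommGroup V] [Module ℂ V]
    (A B : Submodule ℂ E) (g : E →ₗ[ℂ] V) (hg : ∀ v, ∃ f ∈ A, g f = v)
    (hB : ∀ f ∈ A, f ∈ B ↔ g f = 0) :
    Module.finrank ℂ (↥A ⧸ Submodule.comap A.subtype B) = Module.finrank ℂ V := by
  have h : Submodule.comap A.subtype B = LinearMap.ker (g.comp A.subtype) := by
    ext x
    simpa using hB x x.2
  rw [h]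
  refine (LinearMap.quotKerEquivOfSurjective (g.comp A.subtype) ?_).finrank_eq
  intro v
  obtain ⟨f, hf, rfl⟩ := hg v
  exact ⟨⟨f, hf⟩, rfl⟩

lemma finrank_deg2 (n : ℕ) : Module.finrank ℂ (Rdeg n 2) = Nat.choose (n + 1) 2 := by
  have hset : {d : Fin n →₀ ℕ | d.degree = 2} =
      ((Finset.univ : Finset (Fin n)).finsuppAntidiag 2 : Set (Fin n →₀ ℕ)) := by
    ext d
    simp [Finset.mem_finsuppAntidiag, Finsupp.degree_eq_sum]
  rw [Rdeg, homogeneousSubmodule_eq_finsupp_supported, hset,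
    (AddMonoidAlgebra.supportedEquivFinsupp (R := ℂ) (S := ℂ) _).finrank_eq,
    Module.finrank_finsupp_self]
  simp [Finset.card_finsuppAntidiag_nat_eq_choose]

lemma finrank_I2 {n : ℕ} (hn : 4 ≤ n) :
    Module.finrank ℂ ↥((II n).restrictScalars ℂ ⊓ Rdeg n 2) = Nat.choose (n + 1) 2 - 2 := by
  have : NeZero n := ⟨by omega⟩
  have : Module.Finite ℂ (Rdeg n 2) :=
    Module.Finite.iff_fg.2 (homogeneousSubmodule_fg (σ := Fin n) (R := ℂ) 2)
  have hm : ∀ f ∈ Rdeg n 2, f ∈ mId n ^ 2 := by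
    intro f hf
    rw [Rdeg, ← homogeneousSubmodule_one_pow, homogeneousSubmodule_one_eq_span_X] at hf
    rw [pow_two] at hf ⊢
    refine Submodule.mul_induction_on hf ?_ fun _ _ => Ideal.add_mem _
    have : (Submodule.span ℂ (Set.range X) : Submodule ℂ (R n)) ≤ (mId n).restrictScalars ℂ :=
      Submodule.span_le.2 (by rintro _ ⟨i, rfl⟩; exact X_mem n i)
    exact fun a ha b hb => Ideal.mul_mem_mul (this ha) (this hb)
  let g := (c2 n).comp (Rdeg n 2).subtype
  have hsurj : LinearMap.range g = ⊤ := by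
    rw [LinearMap.range_eq_top]
    intro d
    refine ⟨⟨sg2 n d, ?_⟩, c2_sg2 hn d⟩
    rw [sg2_apply]
    exact Submodule.add_mem _
      (Submodule.smul_mem _ _ ((isHomogeneous_X ℂ _).mul (isHomogeneous_X ℂ _)))
      (Submodule.smul_mem _ _ ((isHomogeneous_X ℂ _).mul (isHomogeneous_X ℂ _)))
  have hker : (LinearMap.ker g).map (Rdeg n 2).subtype = (II n).restrictScalars ℂ ⊓ Rdeg n 2 := by
    ext f
    constructor
    · rintro ⟨x, hx, rfl⟩
      exact ⟨(mem_II_iff hn _).2 ⟨c0_pow n 2 two_pos (hm _ x.2), c1_pow n 2 one_lt_two (hm _ x.2),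
        hx⟩, x.2⟩
    · rintro ⟨h1, h2⟩
      exact ⟨⟨f, h2⟩, (mem_II hn h1).2.2, rfl⟩
  have h1 := LinearMap.finrank_range_add_finrank_ker g
  rw [hsurj, finrank_top, finrank_deg2] at h1
  have h2 : Module.finrank ℂ (ℂ × ℂ) = 2 := by simp
  rw [← hker, Submodule.finrank_map_subtype_eq]
  omega

lemma I1 {n : ℕ} (hn : 4 ≤ n) : (II n).restrictScalars ℂ ⊓ Rdeg n 1 = ⊥ := by
  have : NeZero n := ⟨by omega⟩
  rw [eq_bot_iff]
  rintro f ⟨h1, h2⟩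
  have h3 : f ∈ Submodule.span ℂ (Set.range (X : Fin n → R n)) := by
    rw [← homogeneousSubmodule_one_eq_span_X]
    exact h2
  rw [← Fintype.range_linearCombination] at h3
  obtain ⟨c, rfl⟩ := h3
  have h4 := (mem_II hn h1).2.1
  have h5 : c1 n (sg1 n c) = 0 := h4
  rw [c1_sg1] at h5
  simp [h5]

lemma finrank_quot {n : ℕ} (hn : 4 ≤ n) : Module.finrank ℂ (R n ⧸ II n) = n + 3 := by
  have : NeZero n := ⟨by omega⟩
  let g : R n →ₗ[ℂ] ℂ × (Fin n → ℂ) × (ℂ × ℂ) := (c0 n).prod ((c1 n).prod (c2 n))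
  have hker : LinearMap.ker g = (II n).restrictScalars ℂ := by
    ext f
    rw [Submodule.restrictScalars_mem, mem_II_iff hn]
    simp [g]
  have hs : Function.Surjective g := by
    rintro ⟨a, c, d⟩
    refine ⟨C a + sg1 n c + sg2 n d, ?_⟩
    simp [g, c0_C, c0_sg1, c0_sg2, c1_C, c1_sg1, c1_sg2, c2_C, c2_sg1, c2_sg2 hn]
  have e := (LinearMap.quotKerEquivOfSurjective g hs).finrank_eq
  rw [hker] at e
  have e2 : Module.finrank ℂ (R n ⧸ (II n).restrictScalars ℂ) = Module.finrank ℂ (R n ⧸ II n) := rfl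
  rw [← e2, e]
  simp
  omega

lemma main' (n : ℕ) (hn : 4 ≤ n) :
    hilbFn n (II n) 0 = 1 ∧ hilbFn n (II n) 1 = n ∧ hilbFn n (II n) 2 = 2 ∧
    (∀ k : ℕ, 3 ≤ k → hilbFn n (II n) k = 0) := by
  have : NeZero n := ⟨by omega⟩
  refine ⟨?_, ?_, ?_, ?_⟩
  · rw [hilbFn, quot_finrank _ _ (c0 n)]
    · simp
    · exact fun a => ⟨C a, by simp, c0_C n a⟩
    · exact fun f _ => mem_m1 hn f
  · rw [hilbFn, quot_finrank _ _ (c1 n)]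
    · simp
    · exact fun c => ⟨sg1 n c, (mem_m1 hn _).2 (c0_sg1 n c), c1_sg1 n c⟩
    · intro f hf
      have := (mem_m1 hn _).1 hf
      refine (mem_m2 hn f).trans ?_
      simp [this]
  · rw [hilbFn, quot_finrank _ _ (c2 n)]
    · simp
    · exact fun d => ⟨sg2 n d, (mem_m2 hn _).2 ⟨c0_sg2 n d, c1_sg2 n d⟩, c2_sg2 hn d⟩
    · intro f hf
      have := (mem_m2 hn _).1 hf
      rw [sup_eq hn (2 + 1) le_rfl]
      refine (mem_II_iff hn f).trans ?_
      simp [this]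
  · intro k hk
    rw [hilbFn, quot_finrank _ _ (0 : R n →ₗ[ℂ] Fin 0 → ℂ)]
    · simp
    · exact fun v => ⟨0, Submodule.zero_mem _, Subsingleton.elim _ _⟩
    · intro f hf
      rw [sup_eq hn k hk] at hf
      rw [sup_eq hn (k + 1) (by omega)]
      exact ⟨fun _ => rfl, fun _ => hf⟩

/-- For `n ≥ 4` and `I = Δ_n + J_n`: `I ∩ R_1 = 0`,
`dim_ℂ (I ∩ R_2) = C(n+1, 2) − 2`, `m³ ⊆ I`, the Hilbert function of `R/I` is `(1, n, 2)`,
and `dim_ℂ R/I = n + 3`. -/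
theorem delta_plus_J_hilbert_function (n : ℕ) (hn : 4 ≤ n) :
    (Delta n ⊔ Jn n).restrictScalars ℂ ⊓ Rdeg n 1 = ⊥ ∧
    Module.finrank ℂ ↥((Delta n ⊔ Jn n).restrictScalars ℂ ⊓ Rdeg n 2)
      = Nat.choose (n + 1) 2 - 2 ∧
    mId n ^ 3 ≤ Delta n ⊔ Jn n ∧
    hilbFn n (Delta n ⊔ Jn n) 0 = 1 ∧
    hilbFn n (Delta n ⊔ Jn n) 1 = n ∧
    hilbFn n (Delta n ⊔ Jn n) 2 = 2 ∧
    (∀ k : ℕ, 3 ≤ k → hilbFn n (Delta n ⊔ Jn n) k = 0) ∧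
    Module.finrank ℂ (R n ⧸ (Delta n ⊔ Jn n)) = n + 3 := by
  obtain ⟨h0, h1, h2, h3⟩ := main' n hn
  exact ⟨I1 hn, finrank_I2 hn, m3_le hn, h0, h1, h2, h3, finrank_quot hn⟩

end
end

section
/- Let n ≥ 2 and k ≥ 1. Then every R-module homomorphism φ : m^k → R/m^k maps every homogeneous polynomial of degree k into the image of m^{k−1} in R/m^k. Consequently, restriction to the degree-k component defines a ℂ-linear isomorphism Hom_R(m^k, R/m^k) ≅ Hom_ℂ(R_k, m^{k−1}/m^k), and m^{k−1}/m^k is ℂ-linearly isomorphic to R_{k−1}, so that Hom_R(m^k, R/m^k) ≅ Hom_ℂ(R_k, R_{k−1}) as ℂ-vector spaces. -/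
open MvPolynomial

noncomputable section

/-- The ℂ-vector space `m^{k-1}/m^k`. -/
def Qmod (n k : ℕ) : Type :=
  ↥((mId n ^ (k - 1)).restrictScalars ℂ) ⧸
    Submodule.comap ((mId n ^ (k - 1)).restrictScalars ℂ).subtype
      ((mId n ^ k).restrictScalars ℂ)

instance (n k : ℕ) : AddCommGroup (Qmod n k) := by unfold Qmod; infer_instance
instance (n k : ℕ) : Module ℂ (Qmod n k) := by unfold Qmod; infer_instance

/-- The canonical ℂ-linear map `m^{k-1}/m^k → R/m^k`. -/
def iota (n k : ℕ) : Qmod n k →ₗ[ℂ] (R n ⧸ mId n ^ k) :=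
  Submodule.liftQ _
    ((Ideal.Quotient.mkₐ ℂ (mId n ^ k)).toLinearMap ∘ₗ
      ((mId n ^ (k - 1)).restrictScalars ℂ).subtype)
    (by
      intro x hx
      simp only [LinearMap.mem_ker, LinearMap.comp_apply, Submodule.coe_subtype,
        AlgHom.toLinearMap_apply, Ideal.Quotient.mkₐ_eq_mk]
      exact Ideal.Quotient.eq_zero_iff_mem.2 hx)

theorem mem_mId_pow (n k : ℕ) (p : R n) :
    p ∈ mId n ^ k ↔ ∀ x, Finsupp.degree x < k → coeff x p = 0 :=
  mem_pow_idealOfVars_iff' k p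

theorem monomial_mem_mId_pow (n k : ℕ) (a : Fin n →₀ ℕ) (ha : a.degree = k) :
    (monomial a 1 : R n) ∈ mId n ^ k :=
  (monomial_mem_pow_idealOfVars_iff k a one_ne_zero).2 ha.ge

theorem mId_pow_induction (n k : ℕ) {P : ↥(mId n ^ k) → Prop}
    (hm : ∀ (a : Fin n →₀ ℕ) (ha : a.degree = k), P ⟨monomial a 1, monomial_mem_mId_pow n k a ha⟩)
    (h0 : P 0) (hadd : ∀ x y, P x → P y → P (x + y)) (hsmul : ∀ (r : R n) x, P x → P (r • x))
    (f : ↥(mId n ^ k)) : P f := by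
  have hs : mId n ^ k = Ideal.span ((monomial · (1 : ℂ)) '' (Finsupp.degree ⁻¹' {k})) :=
    pow_idealOfVars_eq_span k
  have key : ∀ g ∈ Ideal.span ((monomial · (1 : ℂ)) '' (Finsupp.degree (R := ℕ) (σ := Fin n) ⁻¹' {k})),
      ∃ h : g ∈ mId n ^ k, P ⟨g, h⟩ := by
    intro g hg
    induction hg using Submodule.span_induction with
    | mem x hx =>
      obtain ⟨a, ha, rfl⟩ := hx
      exact ⟨_, hm a ha⟩
    | zero => exact ⟨zero_mem _, h0⟩
    | add x y _ _ hx hy =>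
      obtain ⟨h1, h2⟩ := hx
      obtain ⟨h3, h4⟩ := hy
      exact ⟨add_mem h1 h3, hadd _ _ h2 h4⟩
    | smul r x _ hx =>
      obtain ⟨h1, h2⟩ := hx
      exact ⟨(r • (⟨x, h1⟩ : ↥(mId n ^ k))).2, hsmul r ⟨x, h1⟩ h2⟩
  obtain ⟨f, hf⟩ := f
  exact (key f (hs ▸ hf)).2

theorem coeff_vanish (n k : ℕ) (φ : ↥(mId n ^ k) →ₗ[R n] (R n ⧸ mId n ^ k))
    (i j : Fin n) (hij : i ≠ j) :
    ∀ (t : ℕ) (a c : Fin n →₀ ℕ) (ha : a.degree = k), c.degree + 1 < k → c i = t → c i < a i →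
      ∀ g : R n, Ideal.Quotient.mk (mId n ^ k) g =
        φ ⟨monomial a 1, monomial_mem_mId_pow n k a ha⟩ → coeff c g = 0 := by
  intro t
  induction t with
  | zero =>
    intro a c ha hc hct hca g hg
    obtain ⟨a0, rfl⟩ := le_iff_exists_add'.mp
      (show Finsupp.single i 1 ≤ a by simp [Finsupp.single_le_iff]; omega)
    have ha' : (a0 + Finsupp.single j 1).degree = k := by simpa using ha
    obtain ⟨g', hg'⟩ := Ideal.Quotient.mk_surjective
      (φ ⟨monomial _ 1, monomial_mem_mId_pow n k _ ha'⟩)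
    have hrel : X j * g - X i * g' ∈ mId n ^ k := by
      rw [← Ideal.Quotient.eq, map_mul, map_mul, hg, hg', ← Ideal.Quotient.mk_eq_mk,
        ← Ideal.Quotient.mk_eq_mk]
      change (X j : R n) • φ _ = (X i : R n) • φ _
      rw [← map_smul, ← map_smul]
      congr 1
      ext1
      simp only [Submodule.coe_smul, smul_eq_mul, monomial_add_single]
      ring
    have h := (mem_mId_pow n k _).1 hrel (Finsupp.single j 1 + c) (by
      rw [map_add, Finsupp.degree_single]; omega)
    rw [coeff_sub, coeff_X_mul, coeff_X_mul', if_neg, sub_zero] at h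
    · exact h
    · simp [hct, hij.symm]
  | succ t ih =>
    intro a c ha hc hct hca g hg
    obtain ⟨a0, rfl⟩ := le_iff_exists_add'.mp
      (show Finsupp.single i 1 ≤ a by simp [Finsupp.single_le_iff]; omega)
    obtain ⟨c0, rfl⟩ := le_iff_exists_add'.mp
      (show Finsupp.single i 1 ≤ c by simp [Finsupp.single_le_iff]; omega)
    have ha' : (a0 + Finsupp.single j 1).degree = k := by simpa using ha
    obtain ⟨g', hg'⟩ := Ideal.Quotient.mk_surjective
      (φ ⟨monomial _ 1, monomial_mem_mId_pow n k _ ha'⟩)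
    have hrel : X j * g - X i * g' ∈ mId n ^ k := by
      rw [← Ideal.Quotient.eq, map_mul, map_mul, hg, hg', ← Ideal.Quotient.mk_eq_mk,
        ← Ideal.Quotient.mk_eq_mk]
      change (X j : R n) • φ _ = (X i : R n) • φ _
      rw [← map_smul, ← map_smul]
      congr 1
      ext1
      simp only [Submodule.coe_smul, smul_eq_mul, monomial_add_single]
      ring
    have h := (mem_mId_pow n k _).1 hrel
      (Finsupp.single j 1 + (c0 + Finsupp.single i 1)) (by
      rw [map_add, Finsupp.degree_single]; omega)
    have hcomm : Finsupp.single j 1 + (c0 + Finsupp.single i 1) =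
      Finsupp.single i 1 + (c0 + Finsupp.single j 1) := by abel
    rw [coeff_sub, coeff_X_mul, hcomm, coeff_X_mul] at h
    have h2 := ih (a0 + Finsupp.single j 1) (c0 + Finsupp.single j 1) ha'
      (by simpa using hc)
      (by simpa [Finsupp.single_apply, hij.symm] using hct)
      (by simpa [Finsupp.single_apply, hij.symm] using hca) g' hg'
    rw [h2, sub_zero] at h
    exact h

theorem hom_mem (n k : ℕ) (hn : 2 ≤ n)
    (φ : ↥(mId n ^ k) →ₗ[R n] (R n ⧸ mId n ^ k)) (f : ↥(mId n ^ k)) :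
    φ f ∈ Submodule.map (Ideal.Quotient.mkₐ ℂ (mId n ^ k)).toLinearMap
        ((mId n ^ (k - 1)).restrictScalars ℂ) := by
  induction f using mId_pow_induction with
  | hm a ha =>
    obtain ⟨g, hg⟩ := Ideal.Quotient.mk_surjective
      (φ ⟨monomial _ 1, monomial_mem_mId_pow n k _ ha⟩)
    refine ⟨g, ?_, hg⟩
    refine (mem_mId_pow n (k - 1) g).2 fun c hc => ?_
    obtain ⟨i, hi⟩ : ∃ i, c i < a i := by
      by_contra! hcon
      have := Finsupp.degree_mono (show a ≤ c from hcon)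
      omega
    obtain ⟨j, hj⟩ : ∃ j : Fin n, i ≠ j := by
      have : Nontrivial (Fin n) := Fin.nontrivial_iff_two_le.2 hn
      obtain ⟨j, hj⟩ := exists_ne i
      exact ⟨j, hj.symm⟩
    exact coeff_vanish n k φ i j hj _ a c ha (by omega) rfl hi g hg
  | h0 => rw [map_zero]; exact zero_mem _
  | hadd x y hx hy => rw [map_add]; exact add_mem hx hy
  | hsmul r x hx =>
    obtain ⟨g, hg, hgx⟩ := hx
    rw [map_smul, ← hgx]
    exact ⟨r * g, Ideal.mul_mem_left _ r hg, rfl⟩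

theorem Rdeg_le (n k : ℕ) : Rdeg n k ≤ (mId n ^ k).restrictScalars ℂ := by
  intro f hf
  refine (mem_mId_pow n k f).2 fun x hx => ?_
  by_contra h
  have hf' : f.IsHomogeneous k := hf
  have := hf'.degree_eq_sum_deg_support (mem_support_iff.2 h)
  rw [Finsupp.degree_apply] at hx
  omega

/-- degree-`k` component as a map to `Rdeg`. -/
def compL (n k : ℕ) : R n →ₗ[ℂ] ↥(Rdeg n k) :=
  (homogeneousComponent k).codRestrict (Rdeg n k) (fun f => homogeneousComponent_mem k f)

theorem compL_self (n k : ℕ) (f : ↥(Rdeg n k)) : compL n k f = f := by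
  ext1
  exact homogeneousComponent_eq_self f.2

theorem compL_eq_zero_iff (n k : ℕ) (p : R n) (hp : p ∈ mId n ^ k) :
    compL n k p = 0 ↔ p ∈ mId n ^ (k + 1) := by
  rw [mem_mId_pow] at hp ⊢
  have h0 : compL n k p = 0 ↔ homogeneousComponent k p = 0 := by
    rw [← Submodule.coe_eq_zero]; rfl
  rw [h0, MvPolynomial.ext_iff]
  simp only [coeff_homogeneousComponent, coeff_zero, ite_eq_right_iff]
  constructor
  · intro h x hx
    rcases Nat.lt_succ_iff_lt_or_eq.1 hx with h1 | h1
    · exact hp x h1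
    · exact h x h1
  · intro h x hx
    exact h x (by omega)

theorem sub_C_mem (n : ℕ) (r : R n) : r - C (coeff 0 r) ∈ mId n ^ 1 := by
  rw [mem_mId_pow]
  intro x hx
  have : x = 0 := by
    rw [← Finsupp.degree_eq_zero_iff]; omega
  subst this
  simp

theorem compL_mul (n k : ℕ) (r p : R n) (hp : p ∈ mId n ^ k) :
    compL n k (r * p) = coeff 0 r • compL n k p := by
  have h1 : (r - C (coeff 0 r)) * p ∈ mId n ^ (k + 1) := by
    rw [pow_succ', ← pow_one (mId n), ← pow_mul, one_mul]
    exact Ideal.mul_mem_mul (sub_C_mem n r) hp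
  have h2 := (compL_eq_zero_iff n k _ (Ideal.pow_le_pow_right (Nat.le_succ k) h1)).2 h1
  rw [sub_mul, ← smul_eq_C_mul, map_sub, map_smul, sub_eq_zero] at h2
  exact h2

theorem iota_injective (n k : ℕ) : Function.Injective (iota n k) := by
  rw [← LinearMap.ker_eq_bot]
  unfold iota
  refine Submodule.ker_liftQ_eq_bot _ _ _ ?_
  intro x hx
  exact Ideal.Quotient.eq_zero_iff_mem.1 hx

theorem iota_range (n k : ℕ) : LinearMap.range (iota n k) =
    Submodule.map (Ideal.Quotient.mkₐ ℂ (mId n ^ k)).toLinearMap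
        ((mId n ^ (k - 1)).restrictScalars ℂ) := by
  unfold iota
  refine (Submodule.range_liftQ _ _ _).trans ?_
  rw [LinearMap.range_comp, Submodule.range_subtype]

theorem smul_iota (n k : ℕ) (hk : 1 ≤ k) (r : R n) (q : Qmod n k) :
    r • iota n k q = coeff 0 r • iota n k q := by
  have hq : iota n k q ∈ LinearMap.range (iota n k) := ⟨q, rfl⟩
  rw [iota_range] at hq
  obtain ⟨g, hg, hgq⟩ := hq
  rw [← hgq]
  change Ideal.Quotient.mk (mId n ^ k) (r * g) = Ideal.Quotient.mk (mId n ^ k) (coeff 0 r • g)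
  rw [Ideal.Quotient.eq, smul_eq_C_mul, ← sub_mul]
  have : mId n ^ k = mId n ^ 1 * mId n ^ (k - 1) := by rw [← pow_add]; congr 1; omega
  rw [this]
  exact Ideal.mul_mem_mul (sub_C_mem n r) hg

/-- restriction to the degree-`k` component. -/
def resL (n k : ℕ) : (↥(mId n ^ k) →ₗ[R n] (R n ⧸ mId n ^ k)) →ₗ[ℂ]
    (↥(Rdeg n k) →ₗ[ℂ] (R n ⧸ mId n ^ k)) where
  toFun φ :=
    { toFun := fun f => φ ⟨f.1, Rdeg_le n k f.2⟩
      map_add' := fun f g => φ.map_add ⟨f.1, Rdeg_le n k f.2⟩ ⟨g.1, Rdeg_le n k g.2⟩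
      map_smul' := fun c f => (φ.restrictScalars ℂ).map_smul c ⟨f.1, Rdeg_le n k f.2⟩ }
  map_add' _ _ := rfl
  map_smul' _ _ := rfl

theorem resL_injective (n k : ℕ) : Function.Injective (resL n k) := by
  intro φ ψ h
  ext1 f
  induction f using mId_pow_induction with
  | hm a ha =>
    exact LinearMap.congr_fun h ⟨monomial a 1, isHomogeneous_monomial 1 ha⟩
  | h0 => rw [map_zero, map_zero]
  | hadd x y hx hy => rw [map_add, map_add, hx, hy]
  | hsmul r x hx => rw [map_smul, map_smul, hx]

/-- extension of a linear map on the degree-`k` component. -/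
def extL (n k : ℕ) (hk : 1 ≤ k) (ψ : ↥(Rdeg n k) →ₗ[ℂ] Qmod n k) :
    ↥(mId n ^ k) →ₗ[R n] (R n ⧸ mId n ^ k) where
  toFun f := iota n k (ψ (compL n k f.1))
  map_add' f g := by
    rw [Submodule.coe_add, map_add, map_add, map_add]
  map_smul' r f := by
    rw [Submodule.coe_smul, smul_eq_mul, compL_mul n k r f.1 f.2, map_smul, map_smul,
      RingHom.id_apply, smul_iota n k hk]

theorem resL_range (n k : ℕ) (hn : 2 ≤ n) (hk : 1 ≤ k) :
    LinearMap.range (resL n k) = LinearMap.range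
      ((iota n k).compRight ℂ : (↥(Rdeg n k) →ₗ[ℂ] Qmod n k) →ₗ[ℂ] _) := by
  apply le_antisymm
  · rintro _ ⟨φ, rfl⟩
    have h : ∀ f, ∃ q, iota n k q = resL n k φ f := by
      intro f
      have := hom_mem n k hn φ ⟨f.1, Rdeg_le n k f.2⟩
      rw [← iota_range] at this
      exact this
    refine ⟨(LinearEquiv.ofInjective _ (iota_injective n k)).symm.toLinearMap ∘ₗ
      (resL n k φ).codRestrict _ h, ?_⟩
    ext1 f
    have := (LinearEquiv.ofInjective _ (iota_injective n k)).apply_symm_apply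
      ((resL n k φ).codRestrict _ h f)
    exact congrArg Subtype.val this
  · rintro _ ⟨ψ, rfl⟩
    refine ⟨extL n k hk ψ, ?_⟩
    ext1 f
    change iota n k (ψ (compL n k f.1)) = iota n k (ψ f)
    rw [compL_self]

theorem compRight_iota_injective (n k : ℕ) : Function.Injective
    ((iota n k).compRight ℂ : (↥(Rdeg n k) →ₗ[ℂ] Qmod n k) →ₗ[ℂ] _) := by
  intro ψ₁ ψ₂ h
  ext1 f
  exact iota_injective n k (LinearMap.congr_fun h f)

/-- the restriction isomorphism. -/
def resEquiv (n k : ℕ) (hn : 2 ≤ n) (hk : 1 ≤ k) :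
    (↥(mId n ^ k) →ₗ[R n] (R n ⧸ mId n ^ k)) ≃ₗ[ℂ] (↥(Rdeg n k) →ₗ[ℂ] Qmod n k) :=
  (LinearEquiv.ofInjective _ (resL_injective n k)).trans
    ((LinearEquiv.ofEq _ _ (resL_range n k hn hk)).trans
      (LinearEquiv.ofInjective _ (compRight_iota_injective n k)).symm)

theorem resEquiv_spec (n k : ℕ) (hn : 2 ≤ n) (hk : 1 ≤ k)
    (φ : ↥(mId n ^ k) →ₗ[R n] (R n ⧸ mId n ^ k)) (f : ↥(Rdeg n k)) :
    iota n k (resEquiv n k hn hk φ f) = resL n k φ f := by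
  have := (LinearEquiv.ofInjective _ (compRight_iota_injective n k)).apply_symm_apply
    (LinearEquiv.ofEq _ _ (resL_range n k hn hk)
      (LinearEquiv.ofInjective _ (resL_injective n k) φ))
  exact LinearMap.congr_fun (congrArg Subtype.val this) f

theorem Qmod_equiv (n k : ℕ) (hk : 1 ≤ k) : Nonempty (Qmod n k ≃ₗ[ℂ] ↥(Rdeg n (k - 1))) := by
  let L : ↥((mId n ^ (k - 1)).restrictScalars ℂ) →ₗ[ℂ] ↥(Rdeg n (k - 1)) :=
    compL n (k - 1) ∘ₗ ((mId n ^ (k - 1)).restrictScalars ℂ).subtype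
  have hL : Function.Surjective L := fun f =>
    ⟨⟨f.1, Rdeg_le n (k - 1) f.2⟩, compL_self n (k - 1) f⟩
  have hker : Submodule.comap ((mId n ^ (k - 1)).restrictScalars ℂ).subtype
      ((mId n ^ k).restrictScalars ℂ) = LinearMap.ker L := by
    ext x
    have := compL_eq_zero_iff n (k - 1) x.1 x.2
    rw [Nat.sub_add_cancel hk] at this
    exact this.symm
  exact ⟨(Submodule.quotEquivOfEq _ _ hker).trans (L.quotKerEquivOfSurjective hL)⟩

/-- For `n ≥ 2`, `k ≥ 1`: every `R`-module homomorphism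
`φ : m^k → R/m^k` maps homogeneous polynomials of degree `k` into the image of `m^{k-1}`;
restriction to the degree-`k` component defines a ℂ-linear isomorphism
`Hom_R(m^k, R/m^k) ≅ Hom_ℂ(R_k, m^{k-1}/m^k)`; moreover `m^{k-1}/m^k ≅ R_{k-1}`, so that
`Hom_R(m^k, R/m^k) ≅ Hom_ℂ(R_k, R_{k-1})` as ℂ-vector spaces. -/
theorem hom_from_power_of_maximal_ideal (n k : ℕ) (hn : 2 ≤ n) (hk : 1 ≤ k) :
    (∀ (φ : ↥(mId n ^ k) →ₗ[R n] (R n ⧸ mId n ^ k)) (f : ↥(mId n ^ k)),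
      (f : R n) ∈ Rdeg n k →
      φ f ∈ Submodule.map (Ideal.Quotient.mkₐ ℂ (mId n ^ k)).toLinearMap
        ((mId n ^ (k - 1)).restrictScalars ℂ)) ∧
    (∃ e : (↥(mId n ^ k) →ₗ[R n] (R n ⧸ mId n ^ k)) ≃ₗ[ℂ]
        (↥(Rdeg n k) →ₗ[ℂ] Qmod n k),
      ∀ (φ : ↥(mId n ^ k) →ₗ[R n] (R n ⧸ mId n ^ k)) (f : R n)
        (hf : f ∈ Rdeg n k) (hf' : f ∈ mId n ^ k),
        iota n k ((e φ) ⟨f, hf⟩) = φ ⟨f, hf'⟩) ∧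
    Nonempty (Qmod n k ≃ₗ[ℂ] ↥(Rdeg n (k - 1))) ∧
    Nonempty ((↥(mId n ^ k) →ₗ[R n] (R n ⧸ mId n ^ k)) ≃ₗ[ℂ]
      (↥(Rdeg n k) →ₗ[ℂ] ↥(Rdeg n (k - 1)))) := by
  obtain ⟨q⟩ := Qmod_equiv n k hk
  refine ⟨fun φ f _ => hom_mem n k hn φ f,
    ⟨resEquiv n k hn hk, fun φ f hf _ => resEquiv_spec n k hn hk φ ⟨f, hf⟩⟩, ⟨q⟩,
    ⟨(resEquiv n k hn hk).trans (LinearEquiv.congrRight q)⟩⟩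


end
end
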